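/- Suppose the invertible RDS φ on 𝕊¹ is compressible. Then for any x,y∈𝕊¹ and any ε>0 there exists t∈𝕋⁺ such that ℙ(ω : d₊(φ(t,ω)x,φ(t,ω)y)<ε)>0. -/

import Mathlib

open MeasureTheory Filter Topology Set ENNReal

noncomputable section

/-- The natural projection `π : ℝ → 𝕊¹ = ℝ/ℤ`. -/
def circleProj (x : ℝ) : UnitAddCircle := (x : UnitAddCircle)

/-- `f` is an orientation-preserving homeomorphism of the circle: it admits a strictly
monotone degree-one lift. -/
def OrientPreserving (f : UnitAddCircle ≃ₜ UnitAddCircle) : Prop :=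
  ∃ F : ℝ → ℝ, StrictMono F ∧ (∀ x : ℝ, F (x + 1) = F x + 1) ∧
    ∀ x : ℝ, f (circleProj x) = circleProj (F x)

/-- The anticlockwise distance `d₊(x,y) = min {r ≥ 0 : π(x' + r) = y}` (`x'` any lift of `x`). -/
def dPlus (x y : UnitAddCircle) : ℝ :=
  sInf {r : ℝ | 0 ≤ r ∧ ∃ x' : ℝ, circleProj x' = x ∧ circleProj (x' + r) = y}

/-- An invertible random dynamical system on the circle, in discrete or continuous time,
driven by a stationary memoryless noise process. -/
structure RDS (Ω : Type) [m : MeasurableSpace Ω] where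
  /-- the time set `𝕋⁺`: either `ℕ ∪ {0}` or `[0,∞)`, viewed inside `ℝ` -/
  T : Set ℝ
  T_cases : T = Set.range (fun n : ℕ => (n : ℝ)) ∨ T = Set.Ici (0 : ℝ)
  /-- the filtration -/
  F : ℝ → MeasurableSpace Ω
  F_le : ∀ t ∈ T, F t ≤ m
  F_mono : ∀ s ∈ T, ∀ t ∈ T, s ≤ t → F s ≤ F t
  /-- the probability measure -/
  P : Measure Ω
  P_prob : IsProbabilityMeasure P
  /-- the time-shift maps on the noise space -/
  θ : ℝ → Ω → Ω
  θ_zero : θ 0 = id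
  θ_add : ∀ s ∈ T, ∀ t ∈ T, θ (s + t) = θ t ∘ θ s
  θ_preserving : ∀ t ∈ T, MeasurePreserving (θ t) P P
  θ_adapted : ∀ s ∈ T, ∀ t ∈ T, @Measurable Ω Ω (F (s + t)) (F s) (θ t)
  θ_indep : ∀ t ∈ T, ∀ E A : Set Ω, MeasurableSet[F t] E →
    MeasurableSet[⨆ s ∈ T, F s] A → P (E ∩ θ t ⁻¹' A) = P E * P A
  /-- the random homeomorphisms -/
  φ : ℝ → Ω → UnitAddCircle ≃ₜ UnitAddCircle
  φ_orient : ∀ t ∈ T, ∀ ω, OrientPreserving (φ t ω)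
  φ_meas : ∀ t ∈ T, @Measurable (Ω × UnitAddCircle) UnitAddCircle
    ((F t).prod inferInstance) inferInstance (fun p => φ t p.1 p.2)
  φ_zero : ∀ ω, φ 0 ω = Homeomorph.refl UnitAddCircle
  φ_cocycle : ∀ s ∈ T, ∀ t ∈ T, ∀ ω x, φ (s + t) ω x = φ t (θ s ω) (φ s ω x)
  φ_cadlag_right : ∀ ω, ∀ t ∈ T, ∀ tn : ℕ → ℝ, (∀ n, tn n ∈ T) → Antitone tn →
    Tendsto tn atTop (𝓝 t) → ∀ (xn : ℕ → UnitAddCircle) (x : UnitAddCircle),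
      Tendsto xn atTop (𝓝 x) →
      Tendsto (fun n => φ (tn n) ω (xn n)) atTop (𝓝 (φ t ω x))
  /-- the left-limit maps -/
  φ_left_lim : ℝ → Ω → UnitAddCircle → UnitAddCircle
  φ_cadlag_left : ∀ ω, ∀ t ∈ T, ∀ tn : ℕ → ℝ, (∀ n, tn n ∈ T) → StrictMono tn →
    Tendsto tn atTop (𝓝 t) → ∀ (xn : ℕ → UnitAddCircle) (x : UnitAddCircle),
      Tendsto xn atTop (𝓝 x) →
      Tendsto (fun n => φ (tn n) ω (xn n)) atTop (𝓝 (φ_left_lim t ω x))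

/-- A probability measure on the circle is atomless if every singleton is null. -/
def Atomless (ρ : Measure UnitAddCircle) : Prop := ∀ x, ρ {x} = 0

/-- A measure on the circle has full support. -/
def FullSupport (ρ : Measure UnitAddCircle) : Prop :=
  ∀ U : Set UnitAddCircle, IsOpen U → U.Nonempty → 0 < ρ U

/-- The (topological) support of a measure on the circle. -/
def msupport (ρ : Measure UnitAddCircle) : Set UnitAddCircle :=
  {x | ∀ U : Set UnitAddCircle, IsOpen U → x ∈ U → 0 < ρ U}

namespace RDS

variable {Ω : Type} [m : MeasurableSpace Ω] (S : RDS Ω)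

/-- the future σ-algebra `𝓕₊ = σ(𝓕_t : t ∈ 𝕋⁺)`. -/
def Fplus : MeasurableSpace Ω := ⨆ t ∈ S.T, S.F t

/-- The filter "t → ∞ along the time set 𝕋⁺". -/
def tFilter : Filter ℝ := atTop ⊓ 𝓟 S.T

/-- two-point contractibility. -/
def Contractible : Prop := ∀ x y : UnitAddCircle, x ≠ y →
  0 < S.P {ω | ∃ t ∈ S.T, dist (S.φ t ω x) (S.φ t ω y) < dist x y}

/-- compressibility. -/
def Compressible : Prop := ∀ x y : UnitAddCircle, x ≠ y →
  0 < S.P {ω | ∃ t ∈ S.T, dPlus (S.φ t ω x) (S.φ t ω y) < dPlus x y}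

/-- `p` is a deterministic fixed point. -/
def DetFixedPoint (p : UnitAddCircle) : Prop :=
  ∀ᵐ ω ∂S.P, ∀ t ∈ S.T, S.φ t ω p = p

/-- `A` is forward-invariant. -/
def ForwardInvariant (A : Set UnitAddCircle) : Prop :=
  ∀ᵐ ω ∂S.P, ∀ t ∈ S.T, ⇑(S.φ t ω) '' A ⊆ A

/-- reverse-minimal dynamics: the only open forward-invariant sets are `∅` and `𝕊¹`. -/
def ReverseMinimal : Prop :=
  ∀ A : Set UnitAddCircle, IsOpen A → S.ForwardInvariant A → A = ∅ ∨ A = Set.univ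

/-- synchronisation. -/
def Synchronising : Prop := ∀ x y : UnitAddCircle,
  S.P {ω | Tendsto (fun t => dist (S.φ t ω x) (S.φ t ω y)) S.tFilter (𝓝 0)} = 1

/-- everywhere local stability. -/
def EverywhereLocallyStable : Prop := ∀ x : UnitAddCircle,
  S.P {ω | ∃ U : Set UnitAddCircle, IsOpen U ∧ x ∈ U ∧
    Tendsto (fun t => volume (⇑(S.φ t ω) '' U)) S.tFilter (𝓝 0)} = 1

/-- stable synchronisation. -/
def StablySynchronising : Prop := S.Synchronising ∧ S.EverywhereLocallyStable

/-- `ρ` is reverse-stationary: `ρ(A) = ∫ ρ(φ(t,ω)A) ℙ(dω)` for all `t ∈ 𝕋⁺`, Borel `A`. -/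
def ReverseStationary (ρ : Measure UnitAddCircle) : Prop :=
  ∀ t ∈ S.T, ∀ A : Set UnitAddCircle, MeasurableSet A →
    ρ A = ∫⁻ ω, ρ (⇑(S.φ t ω) '' A) ∂S.P

/-- `r` is a crack point of `ω`. -/
def CrackPoint (ω : Ω) (r : UnitAddCircle) : Prop :=
  ∀ G : Set UnitAddCircle, IsClosed G → r ∉ G →
    Tendsto (fun t => volume (⇑(S.φ t ω) '' G)) S.tFilter (𝓝 0)

/-- the set of contractive sample points. -/
def Ωc : Set Ω := {ω | ∃ r, S.CrackPoint ω r}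

/-- the reverse transition probabilities `φ̄ₓᵗ(A) = ℙ(ω : φ(t,ω)⁻¹(x) ∈ A)`. -/
def revTrans (t : ℝ) (x : UnitAddCircle) (A : Set UnitAddCircle) : ℝ≥0∞ :=
  S.P {ω | (S.φ t ω).symm x ∈ A}

/-- the forward transition probabilities `φₓᵗ(A) = ℙ(ω : φ(t,ω)x ∈ A)`. -/
def fwdTrans (t : ℝ) (x : UnitAddCircle) (A : Set UnitAddCircle) : ℝ≥0∞ :=
  S.P {ω | S.φ t ω x ∈ A}

/-- `ρ` is stationary for a transition family `ν`. -/
def StationaryFor (ν : ℝ → UnitAddCircle → Set UnitAddCircle → ℝ≥0∞)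
    (ρ : Measure UnitAddCircle) : Prop :=
  ∀ t ∈ S.T, ∀ A : Set UnitAddCircle, MeasurableSet A → ρ A = ∫⁻ x, ν t x A ∂ρ

/-- `ρ` is ergodic for a transition family `ν`. -/
def ErgodicFor (ν : ℝ → UnitAddCircle → Set UnitAddCircle → ℝ≥0∞)
    (ρ : Measure UnitAddCircle) : Prop :=
  S.StationaryFor ν ρ ∧ ∀ A : Set UnitAddCircle, MeasurableSet A →
    (∀ t ∈ S.T, ∀ᵐ x ∂ρ, x ∈ A → ν t x A = 1) → ρ A = 0 ∨ ρ A = 1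

end RDS

/-!
Follow the two-point motion in the coordinates (position of the first point, anticlockwise gap),
and collect the states that it approaches, at some time, with positive probability. These states
form a nonempty compact set, so one of them has the least gap `r`. If `r > 0`, compressibility
shrinks that gap with positive probability; by continuity a single event does so for all
sufficiently close states, and the independence of the noise after the time of approach turns this
into an approached state of gap less than `r`. Hence `r = 0`.

Gaps are recorded in `ℝ` rather than on the circle because `dPlus` jumps from `1` to `0` at the
diagonal: a pair of points close together may have a gap close to `1`.
-/

section AnticlockwiseDistance

theorem dPlus_eq_equivIco (x y : UnitAddCircle) :
    dPlus x y = (AddCircle.equivIco 1 0 (y - x) : ℝ) := by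
  obtain ⟨hc₀, hc₁⟩ := (AddCircle.equivIco (1 : ℝ) 0 (y - x)).2
  have hc : ((AddCircle.equivIco 1 0 (y - x) : ℝ) : UnitAddCircle) = y - x := AddCircle.coe_equivIco
  set c : ℝ := (AddCircle.equivIco 1 0 (y - x) : ℝ)
  refine IsLeast.csInf_eq ⟨⟨hc₀, ?_⟩, ?_⟩
  · obtain ⟨x', rfl⟩ := QuotientAddGroup.mk_surjective x
    refine ⟨x', rfl, ?_⟩
    rw [circleProj, AddCircle.coe_add, hc]
    exact add_sub_cancel _ _
  · rintro r ⟨hr, x', rfl, rfl⟩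
    by_contra! hlt
    have hrc : (r : UnitAddCircle) = c := by simp [hc, circleProj]
    exact hlt.ne <|
      (AddCircle.coe_eq_coe_iff_of_mem_Ico ⟨hr, hlt.trans hc₁⟩ ⟨hc₀, hc₁⟩).1 hrc

theorem dPlus_nonneg (x y : UnitAddCircle) : 0 ≤ dPlus x y :=
  (dPlus_eq_equivIco x y).symm ▸ (AddCircle.equivIco 1 0 (y - x)).2.1

theorem dPlus_lt_one (x y : UnitAddCircle) : dPlus x y < 1 := by
  simpa only [dPlus_eq_equivIco, zero_add] using (AddCircle.equivIco 1 0 (y - x)).2.2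

theorem add_coe_dPlus (x y : UnitAddCircle) : x + (dPlus x y : UnitAddCircle) = y := by
  rw [dPlus_eq_equivIco, AddCircle.coe_equivIco, add_sub_cancel]

theorem dPlus_add_coe (x : UnitAddCircle) {r : ℝ} (hr₀ : 0 ≤ r) (hr₁ : r < 1) :
    dPlus x (x + r) = r := by
  refine (AddCircle.coe_eq_coe_iff_of_mem_Ico (p := (1 : ℝ)) (a := 0)
    ⟨dPlus_nonneg _ _, by simpa only [zero_add] using dPlus_lt_one _ _⟩
    ⟨hr₀, by simpa only [zero_add] using hr₁⟩).1 ?_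
  exact add_left_cancel (add_coe_dPlus x (x + r))

theorem dPlus_self (x : UnitAddCircle) : dPlus x x = 0 := by
  simpa only [AddCircle.coe_zero, add_zero] using dPlus_add_coe x le_rfl one_pos

theorem continuousAt_dPlus {p : UnitAddCircle × UnitAddCircle} (hp : p.1 ≠ p.2) :
    ContinuousAt (fun q : UnitAddCircle × UnitAddCircle => dPlus q.1 q.2) p := by
  simp_rw [dPlus_eq_equivIco]
  have hne : p.2 - p.1 ≠ ((0 : ℝ) : UnitAddCircle) := sub_ne_zero.2 hp.symm
  have hsub : ContinuousAt (fun q : UnitAddCircle × UnitAddCircle => q.2 - q.1) p := by fun_prop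
  exact continuous_subtype_val.continuousAt.comp
    ((AddCircle.continuousAt_equivIco 1 0 hne).comp_of_eq hsub rfl)

theorem isOpen_ne_and_dPlus_lt (r : ℝ) :
    IsOpen {q : UnitAddCircle × UnitAddCircle | q.1 ≠ q.2 ∧ dPlus q.1 q.2 < r} := by
  refine isOpen_iff_mem_nhds.2 fun q ⟨hne, hlt⟩ => ?_
  have hne' : ∀ᶠ q' : UnitAddCircle × UnitAddCircle in 𝓝 q, q'.1 ≠ q'.2 :=
    (isOpen_ne_fun continuous_fst continuous_snd).mem_nhds hne
  exact hne'.and ((continuousAt_dPlus hne).eventually_lt_const hlt)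

/-- The coordinates (position of the first point, anticlockwise gap) of a pair of points. -/
def gapCoord (p : UnitAddCircle × UnitAddCircle) : UnitAddCircle × ℝ := (p.1, dPlus p.1 p.2)

/-- The pair of points with the given first point and anticlockwise gap, a left inverse of
`gapCoord`. Unlike `gapCoord`, it is continuous. -/
def ofGapCoord (q : UnitAddCircle × ℝ) : UnitAddCircle × UnitAddCircle := (q.1, q.1 + q.2)

theorem ofGapCoord_gapCoord (p : UnitAddCircle × UnitAddCircle) : ofGapCoord (gapCoord p) = p :=
  Prod.ext rfl (add_coe_dPlus p.1 p.2)

theorem continuous_ofGapCoord : Continuous ofGapCoord := by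
  unfold ofGapCoord
  fun_prop

end AnticlockwiseDistance

theorem exists_measurableSet_pos_forall_mapsTo {Ω X Y : Type*} {mΩ : MeasurableSpace Ω}
    [TopologicalSpace X] [TopologicalSpace.SeparableSpace X] [FirstCountableTopology X]
    [TopologicalSpace Y] [RegularSpace Y] [SecondCountableTopology Y]
    [MeasurableSpace Y] [OpensMeasurableSpace Y] {μ : OuterMeasure Ω} {f : Ω → X → Y}
    (hcont : ∀ ω, Continuous (f ω)) (hmeas : ∀ x, Measurable fun ω => f ω x)
    {x : X} {U : Set Y} (hU : IsOpen U) (hpos : 0 < μ {ω | f ω x ∈ U}) :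
    ∃ V : Set X, IsOpen V ∧ x ∈ V ∧ ∃ A, MeasurableSet A ∧ 0 < μ A ∧ ∀ ω ∈ A, MapsTo (f ω) V U := by
  obtain ⟨y, hyU, hy⟩ := exists_mem_forall_mem_nhdsWithin_pos_measure
    (μ := OuterMeasure.map (fun ω => f ω x) μ) hpos.ne'
  obtain ⟨C, hC, hCclosed, hCU⟩ := exists_mem_nhds_isClosed_subset (hU.mem_nhds hyU)
  have hposC : 0 < μ {ω | f ω x ∈ interior C} :=
    hy _ (mem_nhdsWithin_of_mem_nhds (interior_mem_nhds.2 hC))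
  obtain ⟨D, hDcount, hDdense⟩ := TopologicalSpace.exists_countable_dense X
  obtain ⟨V, hV, hVbasis⟩ := (nhds_basis_opens x).exists_antitone_subbasis
  -- Testing only on the countable dense set `D` keeps these events measurable.
  let A (n : ℕ) : Set Ω := {ω | MapsTo (f ω) (V n ∩ D) C}
  have hcover : {ω | f ω x ∈ interior C} ⊆ ⋃ n, A n := fun ω hω => by
    obtain ⟨n, hn⟩ := hVbasis.mem_iff.1 <|
      (hcont ω).continuousAt.preimage_mem_nhds (isOpen_interior.mem_nhds hω)
    exact mem_iUnion.2 ⟨n, fun q hq => interior_subset (hn hq.1)⟩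
  obtain ⟨n, hn⟩ : ∃ n, 0 < μ (A n) := by
    by_contra! hnull
    exact hposC.ne' <| measure_mono_null hcover <| measure_iUnion_null fun n =>
      nonpos_iff_eq_zero.1 (hnull n)
  have hAmeas : MeasurableSet (A n) := by
    have hA : A n = ⋂ q ∈ V n ∩ D, (fun ω => f ω q) ⁻¹' C := by
      ext ω
      simp only [A, MapsTo, mem_ofPred_eq, mem_iInter, mem_preimage]
    rw [hA]
    exact .biInter (hDcount.mono inter_subset_right) fun q _ => hmeas q hCclosed.measurableSet
  refine ⟨V n, (hV n).2, (hV n).1, A n, hAmeas, hn, fun ω hω q hq => hCU ?_⟩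
  have hclosure := MapsTo.closure hω (hcont ω)
  rw [hCclosed.closure_eq] at hclosure
  exact hclosure (hDdense.open_subset_closure_inter (hV n).2 hq)

namespace RDS

variable {Ω : Type} [MeasurableSpace Ω] (S : RDS Ω)

theorem zero_mem_T : (0 : ℝ) ∈ S.T := by
  rcases S.T_cases with hT | hT <;> rw [hT]
  · exact ⟨0, Nat.cast_zero⟩
  · exact self_mem_Ici

theorem add_mem_T {s t : ℝ} (hs : s ∈ S.T) (ht : t ∈ S.T) : s + t ∈ S.T := by
  rcases S.T_cases with hT | hT <;> rw [hT] at hs ht ⊢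
  · obtain ⟨a, rfl⟩ := hs
    obtain ⟨b, rfl⟩ := ht
    exact ⟨a + b, Nat.cast_add a b⟩
  · exact add_nonneg (mem_Ici.1 hs) (mem_Ici.1 ht)

theorem exists_antitone_rat_tendsto {t : ℝ} (ht : t ∈ S.T) :
    ∃ q : ℕ → ℚ, (∀ n, (q n : ℝ) ∈ S.T) ∧ Antitone (fun n => (q n : ℝ)) ∧
      Tendsto (fun n => (q n : ℝ)) atTop (𝓝 t) := by
  rcases S.T_cases with hT | hT <;> rw [hT] at ht ⊢
  · obtain ⟨k, rfl⟩ := ht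
    refine ⟨fun _ => k, fun _ => ⟨k, ?_⟩, fun _ _ _ => le_rfl, ?_⟩
    · simp only [Rat.cast_natCast]
    · simp only [Rat.cast_natCast, tendsto_const_nhds]
  · obtain ⟨q, hanti, hlt, hlim⟩ := Real.exists_seq_rat_strictAnti_tendsto t
    exact ⟨q, fun n => (mem_Ici.1 ht).trans (hlt n).le,
      fun _ _ hmn => Rat.cast_le.2 (hanti.antitone hmn), hlim⟩

/-- The two-point motion: both coordinates are moved by the same noise realisation. -/
def pairMotion (t : ℝ) (ω : Ω) :
    UnitAddCircle × UnitAddCircle → UnitAddCircle × UnitAddCircle :=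
  Prod.map (S.φ t ω) (S.φ t ω)

theorem continuous_pairMotion (t : ℝ) (ω : Ω) : Continuous (S.pairMotion t ω) :=
  (S.φ t ω).continuous.prodMap (S.φ t ω).continuous

theorem measurable_pairMotion {t : ℝ} (ht : t ∈ S.T) (p : UnitAddCircle × UnitAddCircle) :
    Measurable[S.F t] fun ω => S.pairMotion t ω p := by
  have hφ (x : UnitAddCircle) : Measurable[S.F t] fun ω => S.φ t ω x :=
    (S.φ_meas t ht).comp (@measurable_prodMk_right _ _ (S.F t) _ x)
  exact (hφ p.1).prodMk (hφ p.2)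

theorem pairMotion_zero (ω : Ω) (p : UnitAddCircle × UnitAddCircle) : S.pairMotion 0 ω p = p := by
  rw [pairMotion, S.φ_zero]
  rfl

theorem pairMotion_add {s t : ℝ} (hs : s ∈ S.T) (ht : t ∈ S.T) (ω : Ω)
    (p : UnitAddCircle × UnitAddCircle) :
    S.pairMotion (s + t) ω p = S.pairMotion t (S.θ s ω) (S.pairMotion s ω p) :=
  Prod.ext (S.φ_cocycle s hs t ht ω p.1) (S.φ_cocycle s hs t ht ω p.2)

theorem tendsto_pairMotion {t : ℝ} (ht : t ∈ S.T) {q : ℕ → ℝ} (hq : ∀ n, q n ∈ S.T)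
    (hanti : Antitone q) (hlim : Tendsto q atTop (𝓝 t)) (ω : Ω)
    (p : UnitAddCircle × UnitAddCircle) :
    Tendsto (fun n => S.pairMotion (q n) ω p) atTop (𝓝 (S.pairMotion t ω p)) :=
  (S.φ_cadlag_right ω t ht q hq hanti hlim _ p.1 tendsto_const_nhds).prodMk_nhds
    (S.φ_cadlag_right ω t ht q hq hanti hlim _ p.2 tendsto_const_nhds)

/-- The pair `p` reaches the set `W` if, at some deterministic time, the two-point motion started
at `p` lies in `W` with positive (outer) probability. -/
def Reaches (p : UnitAddCircle × UnitAddCircle) (W : Set (UnitAddCircle × UnitAddCircle)) : Prop :=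
  ∃ t ∈ S.T, 0 < S.P {ω | S.pairMotion t ω p ∈ W}

variable {S} {p q : UnitAddCircle × UnitAddCircle} {U V W : Set (UnitAddCircle × UnitAddCircle)}

theorem Reaches.mono (h : S.Reaches p V) (hVW : V ⊆ W) : S.Reaches p W :=
  let ⟨t, ht, hpos⟩ := h
  ⟨t, ht, hpos.trans_le (measure_mono fun _ hω => hVW hω)⟩

theorem Reaches.nonempty (h : S.Reaches p W) : W.Nonempty :=
  let ⟨_, _, hpos⟩ := h
  let ⟨_, hω⟩ := nonempty_of_measure_ne_zero hpos.ne'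
  ⟨_, hω⟩

theorem reaches_of_mem (hp : p ∈ W) : S.Reaches p W := by
  have := S.P_prob
  refine ⟨0, S.zero_mem_T, ?_⟩
  simp [pairMotion_zero, hp]

theorem reaches_of_measure_exists_pos (hU : IsOpen U)
    (hpos : 0 < S.P {ω | ∃ t ∈ S.T, S.pairMotion t ω p ∈ U}) : S.Reaches p U := by
  let Q : Set ℚ := {r | (r : ℝ) ∈ S.T}
  have hcover : {ω | ∃ t ∈ S.T, S.pairMotion t ω p ∈ U} ⊆
      ⋃ r ∈ Q, {ω | S.pairMotion r ω p ∈ U} := by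
    rintro ω ⟨t, ht, hωt⟩
    obtain ⟨r, hrT, hanti, hlim⟩ := S.exists_antitone_rat_tendsto ht
    obtain ⟨n, hn⟩ :=
      ((S.tendsto_pairMotion ht hrT hanti hlim ω p).eventually (hU.mem_nhds hωt)).exists
    exact mem_biUnion (hrT n) hn
  by_contra hnot
  refine hpos.ne' (measure_mono_null hcover ((measure_biUnion_null_iff Q.to_countable).2 ?_))
  exact fun r hr => not_not.1 fun hne => hnot ⟨r, hr, pos_iff_ne_zero.2 hne⟩

theorem Reaches.trans_of_isOpen (hpq : ∀ V ∈ 𝓝 q, S.Reaches p V) (hq : S.Reaches q U)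
    (hU : IsOpen U) : S.Reaches p U := by
  obtain ⟨t, ht, hpos⟩ := hq
  obtain ⟨V, hVopen, hqV, A, hAmeas, hApos, hAV⟩ :=
    exists_measurableSet_pos_forall_mapsTo (μ := S.P.toOuterMeasure)
      (S.continuous_pairMotion t) (S.measurable_pairMotion ht) hU hpos
  obtain ⟨s, hs, hEpos⟩ := hpq V (hVopen.mem_nhds hqV)
  have hEmeas : MeasurableSet[S.F s] {ω | S.pairMotion s ω p ∈ V} :=
    S.measurable_pairMotion hs p hVopen.measurableSet
  have hAfuture : MeasurableSet[⨆ r ∈ S.T, S.F r] A :=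
    le_iSup₂ (f := fun r (_ : r ∈ S.T) => S.F r) t ht A hAmeas
  have hindep := S.θ_indep s hs _ A hEmeas hAfuture
  refine ⟨s + t, S.add_mem_T hs ht, ?_⟩
  calc
    0 < S.P {ω | S.pairMotion s ω p ∈ V} * S.P A := ENNReal.mul_pos hEpos.ne' hApos.ne'
    _ = S.P ({ω | S.pairMotion s ω p ∈ V} ∩ S.θ s ⁻¹' A) := hindep.symm
    _ ≤ S.P {ω | S.pairMotion (s + t) ω p ∈ U} := measure_mono fun ω ⟨hωV, hωA⟩ => by
      simpa only [mem_ofPred_eq, S.pairMotion_add hs ht] using hAV _ hωA hωV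

theorem Compressible.reaches_dPlus_lt (h : S.Compressible) (hp : p.1 ≠ p.2) :
    S.Reaches p {q | q.1 ≠ q.2 ∧ dPlus q.1 q.2 < dPlus p.1 p.2} := by
  refine reaches_of_measure_exists_pos (isOpen_ne_and_dPlus_lt _) ?_
  exact (h p.1 p.2 hp).trans_le <| measure_mono fun ω ⟨t, ht, hlt⟩ =>
    ⟨t, ht, (S.φ t ω).injective.ne hp, hlt⟩

variable (S) in
/-- The states `(u, r)` of position and anticlockwise gap that the two-point motion started at `p`
approaches arbitrarily closely, at times that may depend on the required closeness. -/
def gapLimits (p : UnitAddCircle × UnitAddCircle) : Set (UnitAddCircle × ℝ) :=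
  {q | ∀ V ∈ 𝓝 q, S.Reaches p (gapCoord ⁻¹' V)}

theorem gapCoord_mem_gapLimits : gapCoord p ∈ S.gapLimits p :=
  fun _ hV => reaches_of_mem (mem_preimage.2 (mem_of_mem_nhds hV))

theorem isClosed_gapLimits : IsClosed (S.gapLimits p) := by
  refine isClosed_of_closure_subset fun q hq V hV => ?_
  obtain ⟨O, hOV, hO, hqO⟩ := mem_nhds_iff.1 hV
  obtain ⟨q', hq'O, hq'⟩ := mem_closure_iff.1 hq O hO hqO
  exact (hq' O (hO.mem_nhds hq'O)).mono (preimage_mono hOV)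

theorem gapLimits_subset_univ_prod_Icc : S.gapLimits p ⊆ univ ×ˢ Icc 0 1 := by
  intro q hq
  by_contra hmem
  have hclosed : IsClosed ((univ : Set UnitAddCircle) ×ˢ Icc (0 : ℝ) 1) :=
    isClosed_univ.prod isClosed_Icc
  obtain ⟨p', hp'⟩ := (hq _ (hclosed.isOpen_compl.mem_nhds hmem)).nonempty
  exact hp' ⟨mem_univ _, dPlus_nonneg _ _, (dPlus_lt_one _ _).le⟩

theorem isCompact_gapLimits : IsCompact (S.gapLimits p) :=
  (isCompact_univ.prod isCompact_Icc).of_isClosed_subset isClosed_gapLimits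
    gapLimits_subset_univ_prod_Icc

theorem reaches_of_mem_gapLimits {q : UnitAddCircle × ℝ} (hq : q ∈ S.gapLimits p)
    (hV : V ∈ 𝓝 (ofGapCoord q)) : S.Reaches p V := by
  simpa only [← preimage_comp, ofGapCoord_gapCoord, Function.comp_def, preimage_id'] using
    hq _ (continuous_ofGapCoord.continuousAt.preimage_mem_nhds hV)

theorem Reaches.exists_mem_gapLimits {B : Set (UnitAddCircle × ℝ)}
    (h : S.Reaches p (gapCoord ⁻¹' B)) : ∃ q ∈ B, q ∈ S.gapLimits p := by
  obtain ⟨t, ht, hpos⟩ := h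
  obtain ⟨q, hqB, hq⟩ := exists_mem_forall_mem_nhdsWithin_pos_measure
    (μ := OuterMeasure.map (fun ω => gapCoord (S.pairMotion t ω p)) S.P.toOuterMeasure) hpos.ne'
  exact ⟨q, hqB, fun V hV => ⟨t, ht, hq V (mem_nhdsWithin_of_mem_nhds hV)⟩⟩

theorem Compressible.exists_mem_gapLimits_snd_lt (h : S.Compressible) {u : UnitAddCircle} {r : ℝ}
    (hr₀ : 0 < r) (hr₁ : r < 1) (hur : (u, r) ∈ S.gapLimits p) :
    ∃ q ∈ S.gapLimits p, q.2 < r := by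
  have hgap : dPlus u (u + r) = r := dPlus_add_coe u hr₀.le hr₁
  have hne : u ≠ u + r := fun heq => hr₀.ne <| by
    rw [← hgap, ← heq, dPlus_self]
  have hshrink : S.Reaches (u, u + (r : UnitAddCircle)) {q | q.1 ≠ q.2 ∧ dPlus q.1 q.2 < r} := by
    simpa only [hgap] using h.reaches_dPlus_lt (p := (u, u + r)) hne
  have hreach : S.Reaches p {q | q.1 ≠ q.2 ∧ dPlus q.1 q.2 < r} :=
    .trans_of_isOpen (fun _ => reaches_of_mem_gapLimits hur) hshrink
      (isOpen_ne_and_dPlus_lt r)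
  obtain ⟨q, hq, hmem⟩ :=
    Reaches.exists_mem_gapLimits (B := {q | q.2 < r}) (hreach.mono fun _ hq => hq.2)
  exact ⟨q, hmem, hq⟩

theorem Compressible.exists_mk_zero_mem_gapLimits (h : S.Compressible) :
    ∃ u, (u, (0 : ℝ)) ∈ S.gapLimits p := by
  obtain ⟨⟨u, r⟩, hur, hmin⟩ :=
    isCompact_gapLimits.exists_isMinOn ⟨_, gapCoord_mem_gapLimits (S := S) (p := p)⟩
      continuous_snd.continuousOn
  have hr₁ : r < 1 := (hmin gapCoord_mem_gapLimits).trans_lt (dPlus_lt_one p.1 p.2)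
  obtain rfl | hr₀ : 0 = r ∨ 0 < r := (gapLimits_subset_univ_prod_Icc hur).2.1.eq_or_lt
  · exact ⟨u, hur⟩
  · obtain ⟨q, hq, hlt⟩ := h.exists_mem_gapLimits_snd_lt hr₀ hr₁ hur
    exact absurd hlt (hmin hq).not_gt

end RDS

/-- if `φ` is compressible then for any `x y` and `ε > 0` there is a time `t` at
which the anticlockwise distance is less than `ε` with positive probability. -/
theorem compressible_dPlus_lt_eps_positive_probability
    {Ω : Type} [MeasurableSpace Ω] (S : RDS Ω) (h : S.Compressible)
    (x y : UnitAddCircle) (ε : ℝ) (hε : 0 < ε) :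
    ∃ t ∈ S.T, 0 < S.P {ω | dPlus (S.φ t ω x) (S.φ t ω y) < ε} := by
  obtain ⟨u, hu⟩ := h.exists_mk_zero_mem_gapLimits (p := (x, y))
  exact hu {q | q.2 < ε} ((isOpen_lt continuous_snd continuous_const).mem_nhds hε)
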